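/- arXiv:1405.6618 — 2 statements merged into one kernel-verified Lean document; each statement's English description precedes it below -/
import Mathlib

section
/- For every nonnegative integer ℓ, nonnegative integer n, and complex number x such that no denominator vanishes: sum over k from 0 to n of ((3x)_k (-ℓ-3x)_k (-n)_k)/(k! (1/2-ℓ)_k (-3n)_k) * (3/4)^k equals (1/2) * ((1+3x)_ℓ (1/2+3x)_ℓ)/((1+6x)_ℓ (1/2)_ℓ) * sum over i from 0 to ℓ of ((-ℓ)_i (6x)_i)/(i! (1+6x+ℓ)_i) * [ (((1+i)/3+x)_n ((2-i)/3-x)_n)/((1/3)_n (2/3)_n) + (((2+i)/3+x)_n ((1-i)/3-x)_n)/((1/3)_n (2/3)_n) ]. -/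
/-- Pochhammer symbol (rising factorial) `(a)_k`. -/
noncomputable def poch (a : ℂ) (k : ℕ) : ℂ := ∏ j ∈ Finset.range k, (a + j)

/-!
Put `a = 3x` and `s = a + i`. By the summation of a terminating very well-poised `₄F₃(1)`, the
factor `(a)_k (-ℓ - a)_k / (1/2 - ℓ)_k` is a combination over `i ≤ ℓ`, with coefficients free of
`k`, of the products `(s)_k (-s)_k / (1/2)_k`. Each of these is in turn the mean of
`(s)_k (1 - s)_k / (1/2)_k` and the same expression at `-s`, to which Gosper's strange evaluation
of `₃F₂(s, 1 - s, -n; 1/2, -3n; 3/4)` applies. Both hypergeometric evaluations follow from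
first-order recurrences (in `k` for the first, starting from Chu–Vandermonde at `k = 0`; in `n` for
Gosper's), each obtained by writing its summand as a difference.
-/

open Finset

lemma poch_zero (a : ℂ) : poch a 0 = 1 := prod_range_zero _

lemma poch_succ (a : ℂ) (k : ℕ) : poch a (k + 1) = poch a k * (a + k) := prod_range_succ _ _

lemma poch_add (a : ℂ) (m k : ℕ) : poch a (m + k) = poch a m * poch (a + m) k := by
  simp only [poch, prod_range_add, Nat.cast_add, add_assoc]

lemma poch_succ_left (a : ℂ) (k : ℕ) : poch a (k + 1) = a * poch (a + 1) k := by
  rw [add_comm, poch_add, poch_succ, poch_zero, Nat.cast_zero, Nat.cast_one, one_mul, add_zero]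

lemma mul_poch_add_one (a : ℂ) (k : ℕ) : a * poch (a + 1) k = (a + k) * poch a k := by
  rw [← poch_succ_left, poch_succ, mul_comm]

lemma poch_ne_zero_iff {a : ℂ} {k : ℕ} : poch a k ≠ 0 ↔ ∀ j < k, a + j ≠ 0 := by
  simp only [poch, prod_ne_zero_iff, mem_range]

lemma poch_ne_zero_of_le {a : ℂ} {k m : ℕ} (hkm : k ≤ m) (hm : poch a m ≠ 0) : poch a k ≠ 0 :=
  poch_ne_zero_iff.2 fun j hj => poch_ne_zero_iff.1 hm j (hj.trans_le hkm)

lemma half_sub_natCast_add_natCast_ne_zero (m k : ℕ) : (1 / 2 - m + k : ℂ) ≠ 0 := by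
  intro h
  have hodd : ((1 + 2 * k : ℕ) : ℂ) = (2 * m : ℕ) := by
    push_cast
    linear_combination 2 * h
  have := Nat.cast_injective hodd
  omega

lemma poch_half_ne_zero (k : ℕ) : poch (1 / 2) k ≠ 0 := by
  simpa [poch_ne_zero_iff] using fun j (_ : j < k) => half_sub_natCast_add_natCast_ne_zero 0 j

lemma poch_neg_natCast_ne_zero {m k : ℕ} (hkm : k ≤ m) : poch (-m) k ≠ 0 :=
  poch_ne_zero_iff.2 fun j hj h => by
    have : j = m := by exact_mod_cast neg_add_eq_zero.1 h |>.symm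
    omega

lemma poch_neg_natCast_eq_zero {m k : ℕ} (hmk : m < k) : poch (-m) k = 0 :=
  prod_eq_zero (mem_range.2 hmk) (neg_add_cancel _)

lemma poch_duplication (a : ℂ) (m : ℕ) :
    4 ^ m * (poch (1 + a) m * poch (1 / 2 + a) m) =
      poch (1 + 2 * a) m * poch (1 + 2 * a + m) m := by
  rw [← poch_add]
  induction m with
  | zero => simp [poch_zero]
  | succ m ih =>
    rw [show m + 1 + (m + 1) = m + m + 1 + 1 by ring]
    simp only [poch_succ, ← ih]
    push_cast
    ring

lemma four_pow_mul_poch_half (m : ℕ) : 4 ^ m * poch (1 / 2) m = poch (1 + m) m := by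
  have h := poch_duplication 0 m
  have h1 : poch 1 m ≠ 0 := poch_ne_zero_iff.2 fun j _ => by
    rw [add_comm]
    exact j.cast_add_one_ne_zero
  simp only [add_zero, mul_zero] at h
  exact mul_left_cancel₀ h1 (by linear_combination h)

lemma poch_add_one_mul_poch_neg_add (s : ℂ) (k : ℕ) :
    poch (s + 1) k * poch (-s) k + poch s k * poch (1 - s) k = 2 * (poch s k * poch (-s) k) := by
  cases k with
  | zero => norm_num [poch_zero]
  | succ k =>
    rw [poch_succ_left s, poch_succ_left (-s), neg_add_eq_sub, poch_succ, poch_succ]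
    ring

lemma poch_eq_factorial_mul_multichoose (a : ℂ) (k : ℕ) :
    poch a k = k.factorial * Ring.multichoose a k := by
  rw [← nsmul_eq_mul, Ring.factorial_nsmul_multichoose_eq_ascPochhammer,
    Polynomial.ascPochhammer_smeval_eq_eval]
  induction k with
  | zero => simp [poch_zero]
  | succ k ih => rw [poch_succ, ih, ascPochhammer_succ_eval]

lemma poch_neg_eq_factorial_mul_choose (a : ℂ) (k : ℕ) :
    poch (-a) k = (-1) ^ k * (k.factorial * Ring.choose a k) := by
  have hchoose : Ring.choose a k = (-1) ^ k * Ring.multichoose (-a) k := by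
    have h := Ring.choose_neg' (-a) k
    rw [neg_neg] at h
    simp [h, Int.negOnePow_def, Units.smul_def]
  rw [hchoose, poch_eq_factorial_mul_multichoose, mul_left_comm, ← mul_assoc ((-1 : ℂ) ^ k),
    ← mul_pow, neg_one_mul, neg_neg, one_pow, one_mul]

/-- The `i`-th summand `(-m)_i (b)_i / (i! (c)_i)` of the terminating Gauss series
`₂F₁(-m, b; c; 1)`. -/
noncomputable def gaussTerm (m : ℕ) (b c : ℂ) (i : ℕ) : ℂ :=
  poch (-m) i * poch b i / (i.factorial * poch c i)

lemma gaussTerm_eq_zero (b c : ℂ) {m i : ℕ} (hmi : m < i) : gaussTerm m b c i = 0 := by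
  rw [gaussTerm, poch_neg_natCast_eq_zero hmi, zero_mul, zero_div]

lemma gaussTerm_succ (b : ℂ) {c : ℂ} {m i : ℕ} (hc : poch c m ≠ 0) (hi : i ≤ m) :
    (i + 1) * (c + i) * gaussTerm m b c (i + 1) = (i - m) * (b + i) * gaussTerm m b c i := by
  rcases hi.lt_or_eq with hlt | rfl
  · have hci : c + i ≠ 0 := poch_ne_zero_iff.1 hc i hlt
    simp only [gaussTerm, poch_succ, Nat.factorial_succ]
    push_cast
    field_simp
    ring
  · rw [gaussTerm_eq_zero b c i.lt_succ_self, sub_self, mul_zero, zero_mul, zero_mul]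

lemma sum_gaussTerm (m : ℕ) (b c : ℂ) (hc : poch c m ≠ 0) :
    ∑ i ∈ range (m + 1), gaussTerm m b c i = poch (c - b) m / poch c m := by
  have hterm (i : ℕ) (hi : i ∈ range (m + 1)) : gaussTerm m b c i * poch c m =
      m.factorial * (Ring.choose (-b) i * Ring.choose (c + m - 1) (m - i)) := by
    have him : i ≤ m := mem_range_succ_iff.1 hi
    have hsplit : poch c m =
        poch c i * ((m - i).factorial * Ring.choose (c + m - 1) (m - i)) := by
      conv_lhs => rw [← Nat.add_sub_cancel' him, poch_add,
        poch_eq_factorial_mul_multichoose (c + i), Ring.multichoose_eq, Nat.cast_sub him,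
        add_assoc, add_sub_cancel]
    have hb := poch_neg_eq_factorial_mul_choose (-b) i
    have hchoose : (m.choose i * i.factorial * (m - i).factorial : ℂ) = m.factorial := by
      exact_mod_cast Nat.choose_mul_factorial_mul_factorial him
    have hsign : (-1 : ℂ) ^ i * (-1) ^ i = 1 := by rw [← mul_pow]; norm_num
    have hci := poch_ne_zero_of_le him hc
    have hi0 : (i.factorial : ℂ) ≠ 0 := by exact_mod_cast i.factorial_ne_zero
    rw [neg_neg] at hb
    rw [gaussTerm, poch_neg_eq_factorial_mul_choose, hb, Ring.choose_natCast, hsplit, ← hchoose]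
    field_simp
    linear_combination
      m.choose i * Ring.choose (-b) i * (m - i).factorial * Ring.choose (c + m - 1) (m - i) * hsign
  have hvandermonde := Ring.add_choose_eq m (Commute.all (-b) (c + m - 1))
  rw [Nat.sum_antidiagonal_eq_sum_range_succ
    (fun i j => Ring.choose (-b) i * Ring.choose (c + m - 1) j)] at hvandermonde
  rw [eq_div_iff hc, sum_mul, sum_congr rfl hterm, ← mul_sum, ← hvandermonde,
    poch_eq_factorial_mul_multichoose, Ring.multichoose_eq]
  ring_nf

/-- The sum of `(s)_k (-s)_k` over `s = a + i`, weighted by the Gauss terms. Up to the factor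
`(a)_k (-a)_k` this is a terminating very well-poised `₄F₃(1)`; unlike that series, it makes sense
also when the factor vanishes. -/
noncomputable def wellPoisedSum (m : ℕ) (a : ℂ) (k : ℕ) : ℂ :=
  ∑ i ∈ range (m + 1),
    gaussTerm m (2 * a) (1 + 2 * a + m) i * (poch (a + i) k * poch (-(a + i)) k)

lemma wellPoisedSum_succ {m : ℕ} {a : ℂ} (ha : poch (1 + 2 * a + m) m ≠ 0) (k : ℕ) :
    (1 / 2 - m + k) * wellPoisedSum m a (k + 1) =
      (1 / 2 + k) * ((a + k) * (-m - a + k)) * wellPoisedSum m a k := by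
  let T : ℕ → ℂ := gaussTerm m (2 * a) (1 + 2 * a + m)
  let G : ℕ → ℂ := fun i =>
    (1 - 2 * (a + i)) / 4 * (i * (2 * a + m + i) * T i) * (poch (a + i) k * poch (1 - (a + i)) k)
  have hG (i : ℕ) (hi : i ≤ m) : G (i + 1) - G i =
      (1 / 2 - m + k) * (T i * (poch (a + i) (k + 1) * poch (-(a + i)) (k + 1))) -
      (1 / 2 + k) * ((a + k) * (-m - a + k)) * (T i * (poch (a + i) k * poch (-(a + i)) k)) := by
    have hT := gaussTerm_succ (2 * a) ha hi
    have hmean := poch_add_one_mul_poch_neg_add (a + i) k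
    have hshift := mul_poch_add_one (a + i) k
    simp only [G, poch_succ]
    rw [show a + (i + 1 : ℕ) = a + i + 1 by push_cast; ring,
      show 1 - (a + i + 1) = -(a + i) by ring]
    push_cast
    linear_combination
      (1 - 2 * (a + i + 1)) / 4 * (poch (a + i + 1) k * poch (-(a + i)) k) * hT -
      (1 - 2 * (a + i)) / 4 * (i * (2 * a + m + i) * T i) * hmean +
      T i * (m / 2 - i * (2 * a + i) + m * a) * poch (-(a + i)) k * hshift
  have hsum : ∑ i ∈ range (m + 1), (G (i + 1) - G i) = 0 := by
    rw [sum_range_sub]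
    simp [G, T, gaussTerm_eq_zero]
  rw [sum_congr rfl fun i hi => hG i (mem_range_succ_iff.1 hi), sum_sub_distrib, ← mul_sum,
    ← mul_sum] at hsum
  exact sub_eq_zero.1 hsum

lemma wellPoisedSum_eq {m : ℕ} {a : ℂ} (ha : poch (1 + 2 * a + m) m ≠ 0) (k : ℕ) :
    wellPoisedSum m a k = poch (1 + m) m / poch (1 + 2 * a + m) m *
      (poch a k * poch (-m - a) k * poch (1 / 2) k / poch (1 / 2 - m) k) := by
  induction k with
  | zero =>
    simp only [wellPoisedSum, poch_zero, mul_one, div_one, sum_gaussTerm _ _ _ ha]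
    rw [show 1 + 2 * a + m - 2 * a = 1 + (m : ℂ) by ring]
  | succ k ih =>
    have hk := half_sub_natCast_add_natCast_ne_zero m k
    refine mul_left_cancel₀ hk ?_
    rw [wellPoisedSum_succ ha, ih]
    simp only [poch_succ]
    generalize poch (1 / 2 - m) k = p
    generalize (1 / 2 - m + k : ℂ) = d at hk ⊢
    field_simp

lemma poch_mul_poch_div_eq_wellPoisedSum {m : ℕ} {a : ℂ} (h : poch (1 + 2 * a) m ≠ 0)
    (h' : poch (1 + 2 * a + m) m ≠ 0) (k : ℕ) :
    poch a k * poch (-m - a) k / poch (1 / 2 - m) k =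
      poch (1 + a) m * poch (1 / 2 + a) m / (poch (1 + 2 * a) m * poch (1 / 2) m) *
        (wellPoisedSum m a k / poch (1 / 2) k) := by
  have hk := poch_half_ne_zero k
  have hm := poch_half_ne_zero m
  have hconst : poch (1 + a) m * poch (1 / 2 + a) m / (poch (1 + 2 * a) m * poch (1 / 2) m) *
      (poch (1 + m) m / poch (1 + 2 * a + m) m) = 1 := by
    rw [← four_pow_mul_poch_half, div_mul_div_comm, div_eq_one_iff_eq (by positivity)]
    linear_combination poch (1 / 2) m * poch_duplication a m
  rw [wellPoisedSum_eq h', mul_div_assoc (poch (1 + m) m / _), ← mul_assoc, hconst, one_mul,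
    div_right_comm, mul_div_cancel_right₀ _ hk]

/-- The part `(-n)_k / (k! (1/2)_k (-3n)_k) (3/4)^k` of the summand of Gosper's strange series that
does not involve the free parameter. -/
noncomputable def gosperWeight (n k : ℕ) : ℂ :=
  poch (-n) k / (k.factorial * poch (1 / 2) k * poch (-(3 * n)) k) * (3 / 4) ^ k

lemma gosperWeight_zero (n : ℕ) : gosperWeight n 0 = 1 := by
  simp [gosperWeight, poch_zero]

lemma gosperWeight_eq_zero {n k : ℕ} (hnk : n < k) : gosperWeight n k = 0 := by
  rw [gosperWeight, poch_neg_natCast_eq_zero hnk, zero_div, zero_mul]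

lemma gosperWeight_succ_right {n k : ℕ} (hk : k ≤ n) :
    2 * (k + 1) * (2 * k + 1) * (3 * n - k) * gosperWeight n (k + 1) =
      3 * (n - k) * gosperWeight n k := by
  rcases Nat.eq_zero_or_pos n with rfl | hn
  · obtain rfl : k = 0 := by omega
    simp
  have hkn : (3 * n - k : ℂ) ≠ 0 := by
    rw [sub_ne_zero]
    exact_mod_cast (show 3 * n ≠ k by omega)
  have hk2 : (2 * k + 1 : ℂ) ≠ 0 := by norm_cast
  simp only [gosperWeight, poch_succ, Nat.factorial_succ, pow_succ]
  push_cast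
  rw [show (1 / 2 + k : ℂ) = (2 * k + 1) / 2 by ring,
    show (-(3 * n) + k : ℂ) = -(3 * n - k) by ring]
  field_simp
  ring

lemma gosperWeight_succ_succ {n k : ℕ} (hk : k ≤ n) :
    2 * (k + 1) * (2 * k + 1) * ((3 * n + 1) * (3 * n + 2)) * gosperWeight (n + 1) (k + 1) =
      (3 * n + 2 - k) * (3 * n + 1 - k) * gosperWeight n k := by
  have hshift : (3 * n + 2) * (3 * n + 1) * poch (-(3 * n)) k =
      (3 * n + 2 - k) * (3 * n + 1 - k) * poch (-(3 * n + 2)) k := by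
    have h2 := mul_poch_add_one (-(3 * n + 2)) k
    have h1 := mul_poch_add_one (-(3 * n + 1)) k
    rw [show (-(3 * n + 2) + 1 : ℂ) = -(3 * n + 1) by ring] at h2
    rw [show (-(3 * n + 1) + 1 : ℂ) = -(3 * n) by ring] at h1
    linear_combination -(3 * n + 2) * h1 - (3 * n + 1 - k) * h2
  have h3n : poch (-(3 * n)) k ≠ 0 := by
    exact_mod_cast poch_neg_natCast_ne_zero (m := 3 * n) (k := k) (by omega)
  have h3n2 : poch (-(3 * n + 2)) k ≠ 0 := by
    exact_mod_cast poch_neg_natCast_ne_zero (m := 3 * n + 2) (k := k) (by omega)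
  have hk2 : (2 * k + 1 : ℂ) ≠ 0 := by norm_cast
  have hhalf := poch_half_ne_zero k
  have hfact : (k.factorial : ℂ) ≠ 0 := by exact_mod_cast k.factorial_ne_zero
  simp only [gosperWeight, poch_succ_left (-(_ : ℂ)), poch_succ, Nat.factorial_succ, pow_succ]
  push_cast
  rw [show (-(n + 1) + 1 : ℂ) = -n by ring, show (-(3 * (n + 1)) + 1 : ℂ) = -(3 * n + 2) by ring,
    show (1 / 2 + k : ℂ) = (2 * k + 1) / 2 by ring]
  field_simp
  linear_combination 4 * poch (-n) k * hshift

lemma gosperWeight_recurrence {n k : ℕ} (hk : k ≤ n) :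
    (3 * n + 1) * (3 * n + 2) * gosperWeight (n + 1) (k + 1) =
      (3 * n - k) * (3 * n + k + 3) * gosperWeight n (k + 1) + gosperWeight n k := by
  have h0 : (2 * (k + 1) * (2 * k + 1) : ℂ) ≠ 0 := by norm_cast
  refine mul_left_cancel₀ h0 ?_
  linear_combination gosperWeight_succ_succ hk - (3 * n + k + 3) * gosperWeight_succ_right hk

lemma sum_gosper_telescope (a : ℂ) {n K : ℕ} (hK : K ≤ n + 1) :
    ∑ k ∈ range (K + 1), poch a k * poch (1 - a) k *
        ((3 * n + 1) * (3 * n + 2) * gosperWeight (n + 1) k -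
          (3 * n + 1 + a) * (3 * n + 2 - a) * gosperWeight n k) =
      -(poch a (K + 1) * poch (1 - a) (K + 1) * gosperWeight n K) := by
  induction K with
  | zero =>
    simp only [zero_add, sum_range_one, poch_succ, poch_zero, gosperWeight_zero, Nat.cast_zero]
    ring
  | succ K ih =>
    rw [sum_range_succ, ih (by omega), mul_sub, mul_left_comm]
    have h := gosperWeight_recurrence (n := n) (k := K) (by omega)
    rw [poch_succ a (K + 1), poch_succ (1 - a) (K + 1)]
    push_cast
    linear_combination poch a (K + 1) * poch (1 - a) (K + 1) * h

lemma sum_gosper_succ (a : ℂ) (n : ℕ) :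
    (3 * n + 1) * (3 * n + 2) *
        ∑ k ∈ range (n + 2), poch a k * poch (1 - a) k * gosperWeight (n + 1) k =
      (3 * n + 1 + a) * (3 * n + 2 - a) *
        ∑ k ∈ range (n + 1), poch a k * poch (1 - a) k * gosperWeight n k := by
  have h := sum_gosper_telescope a (le_refl (n + 1))
  have hlast := gosperWeight_eq_zero n.lt_succ_self
  rw [hlast, mul_zero, neg_zero] at h
  have hext : ∑ k ∈ range (n + 1), poch a k * poch (1 - a) k * gosperWeight n k =
      ∑ k ∈ range (n + 2), poch a k * poch (1 - a) k * gosperWeight n k := by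
    rw [sum_range_succ _ (n + 1), hlast, mul_zero, add_zero]
  rw [hext, ← sub_eq_zero, ← h, mul_sum, mul_sum, ← sum_sub_distrib]
  exact sum_congr rfl fun k _ => by ring

lemma sum_gosper (a : ℂ) (n : ℕ) :
    ∑ k ∈ range (n + 1), poch a k * poch (1 - a) k * gosperWeight n k =
      poch ((1 + a) / 3) n * poch ((2 - a) / 3) n / (poch (1 / 3) n * poch (2 / 3) n) := by
  induction n with
  | zero => simp [poch_zero, gosperWeight_zero]
  | succ n ih =>
    have h1 : (3 * n + 1 : ℂ) ≠ 0 := by norm_cast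
    have h2 : (3 * n + 2 : ℂ) ≠ 0 := by norm_cast
    refine mul_left_cancel₀ (mul_ne_zero h1 h2) ?_
    rw [sum_gosper_succ, ih]
    simp only [poch_succ]
    rw [show (1 / 3 + n : ℂ) = (3 * n + 1) / 3 by ring,
      show (2 / 3 + n : ℂ) = (3 * n + 2) / 3 by ring,
      show (1 + a) / 3 + n = (3 * n + 1 + a) / 3 by ring,
      show (2 - a) / 3 + n = (3 * n + 2 - a) / 3 by ring]
    field_simp

lemma sum_poch_mul_poch_neg_mul_gosperWeight (s : ℂ) (n : ℕ) :
    ∑ k ∈ range (n + 1), poch s k * poch (-s) k * gosperWeight n k =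
      1 / 2 * (poch ((1 + s) / 3) n * poch ((2 - s) / 3) n / (poch (1 / 3) n * poch (2 / 3) n) +
        poch ((2 + s) / 3) n * poch ((1 - s) / 3) n / (poch (1 / 3) n * poch (2 / 3) n)) := by
  have h := sum_gosper (-s) n
  rw [sub_neg_eq_add, sub_neg_eq_add, add_comm 1 s, ← sub_eq_add_neg, mul_comm (poch _ n)] at h
  rw [← sum_gosper, ← h, ← sum_add_distrib, mul_sum]
  refine sum_congr rfl fun k _ => ?_
  linear_combination -gosperWeight n k / 2 * poch_add_one_mul_poch_neg_add s k

lemma sum_wellPoisedSum_mul_gosperWeight (m n : ℕ) (a : ℂ) :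
    ∑ k ∈ range (n + 1), wellPoisedSum m a k * gosperWeight n k =
      ∑ i ∈ range (m + 1), gaussTerm m (2 * a) (1 + 2 * a + m) i *
        ∑ k ∈ range (n + 1), poch (a + i) k * poch (-(a + i)) k * gosperWeight n k := by
  simp only [wellPoisedSum, sum_mul, mul_sum, mul_assoc]
  exact sum_comm

theorem gosper_related_extension (ℓ n : ℕ) (x : ℂ)
    (h6xℓ : poch (1 + 6*x) ℓ ≠ 0)
    (hdeni : ∀ i ≤ ℓ, poch (1 + 6*x + ℓ) i ≠ 0)
    (hden : ∀ k ≤ n, poch (1/2 - ℓ) k ≠ 0 ∧ poch (-(3*n : ℂ)) k ≠ 0)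
    (hhalf : poch (1/2) ℓ ≠ 0)
    (h13 : poch (1/3) n ≠ 0) (h23 : poch (2/3) n ≠ 0) :
    ∑ k ∈ Finset.range (n+1),
      (poch (3*x) k * poch (-ℓ - 3*x : ℂ) k * poch (-(n : ℂ)) k) /
        ((Nat.factorial k : ℂ) * poch (1/2 - ℓ) k * poch (-(3*n : ℂ)) k) * (3/4 : ℂ)^k
      = (1/2 : ℂ) * ((poch (1 + 3*x) ℓ * poch (1/2 + 3*x) ℓ) / (poch (1 + 6*x) ℓ * poch (1/2) ℓ)) *
        ∑ i ∈ Finset.range (ℓ+1),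
          (poch (-(ℓ : ℂ)) i * poch (6*x) i) / ((Nat.factorial i : ℂ) * poch (1 + 6*x + ℓ) i) *
            ((poch ((1 + i)/3 + x) n * poch ((2 - i)/3 - x) n) /
                (poch (1/3) n * poch (2/3) n)
              + (poch ((2 + i)/3 + x) n * poch ((1 - i)/3 - x) n) /
                (poch (1/3) n * poch (2/3) n)) := by
  have h6 : 6 * x = 2 * (3 * x) := by ring
  have hℓ := hdeni ℓ le_rfl
  rw [h6] at h6xℓ hℓ ⊢
  have hsummand (k : ℕ) :=
    congrArg (· * (poch (-n) k / (k.factorial * poch (-(3 * n)) k) * (3 / 4) ^ k))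
      (poch_mul_poch_div_eq_wellPoisedSum h6xℓ hℓ k)
  trans poch (1 + 3 * x) ℓ * poch (1 / 2 + 3 * x) ℓ /
      (poch (1 + 2 * (3 * x)) ℓ * poch (1 / 2) ℓ) *
    ∑ k ∈ range (n + 1), wellPoisedSum ℓ (3 * x) k * gosperWeight n k
  · rw [mul_sum]
    refine sum_congr rfl fun k _ => ?_
    rw [gosperWeight]
    linear_combination hsummand k
  rw [sum_wellPoisedSum_mul_gosperWeight, mul_comm (1 / 2 : ℂ), mul_assoc, mul_sum (a := 1 / 2)]
  congr 1
  refine sum_congr rfl fun i _ => ?_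
  rw [sum_poch_mul_poch_neg_mul_gosperWeight, gaussTerm]
  ring_nf
end

section
/- For every nonnegative integer n and complex number x such that 1+6x != 0: sum over k from 0 to n of ((3x)_k (-3x)_k (-n)_k)/(k! (1/2)_k (-1-3n)_k) * (3/4)^k equals ((1+3x)/2) * ((4/3+x)_n (2/3-x)_n)/((2/3)_n (4/3)_n) + ((1-3x)/2) * ((2/3+x)_n (4/3-x)_n)/((2/3)_n (4/3)_n). -/
/-!
Put `F_u(n, k)` for the summand of `₃F₂(1 - 3u, 1 + 3u, -n; 3/2, -1 - 3n; 3/4)`, a series symmetric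
in `u ↦ -u`. Its sum satisfies a first-order recurrence in `n`, because
`(2/3 + n)(4/3 + n) F_u(n + 1, k) - ((n + 1)² - u²) F_u(n, k)` telescopes in `k`; hence it equals
`(1 + u)_n (1 - u)_n / ((2/3)_n (4/3)_n)`. The summand of the theorem is the combination of
`F_u(n, k)` at `u = 1/3 ± x` with weights `(1 ± 3x)/2`, so its sum is the same combination of the
two closed forms.
-/

open Finset Polynomial

local notation:max "⦅" a "⦆_" k:max => eval a (ascPochhammer _ k)

theorem ascPochhammer_eval_succ_left {R : Type*} [CommSemiring R] (a : R) (k : ℕ) :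
    ⦅a⦆_(k + 1) = a * ⦅a + 1⦆_k := by
  simp [ascPochhammer_succ_left, eval_comp]

section CommRing

variable {R : Type*} [CommRing R]

theorem ascPochhammer_eval_sub_three (a : R) (k : ℕ) :
    ⦅a - 3⦆_(k + 1) * ((a + k - 2) * (a + k - 1)) = (a - 3) * (a - 2) * (a - 1) * ⦅a⦆_k :=
  calc
    _ = ⦅a - 3⦆_(k + 3) := by
      rw [ascPochhammer_succ_eval (k + 2), ascPochhammer_succ_eval (k + 1)]
      push_cast
      ring
    _ = (a - 3) * (a - 2) * (a - 1) * ⦅a⦆_k := by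
      simp only [ascPochhammer_eval_succ_left]
      ring_nf

theorem ascPochhammer_eval_mul_eval_neg (t : R) (k : ℕ) :
    2 * (2 * k + 1) * (⦅t⦆_k * ⦅-t⦆_k) =
      (1 + t) * (⦅-t⦆_k * ⦅2 + t⦆_k) + (1 - t) * (⦅t⦆_k * ⦅2 - t⦆_k) := by
  cases k with
  | zero => simp; ring
  | succ k =>
    have raise (s : R) :
        (1 + s) * ⦅2 + s⦆_(k + 1) = ⦅s + 1⦆_k * (s + 1 + k) * (s + 2 + k) := by
      rw [show 2 + s = s + 1 + 1 by ring, add_comm 1 s, ← ascPochhammer_eval_succ_left,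
        ascPochhammer_succ_eval, ascPochhammer_succ_eval]
      push_cast
      ring
    have raise_neg := raise (-t)
    rw [← sub_eq_add_neg, ← sub_eq_add_neg] at raise_neg
    rw [mul_left_comm (1 + t), raise, mul_left_comm (1 - t), raise_neg,
      ascPochhammer_eval_succ_left t, ascPochhammer_eval_succ_left (-t)]
    push_cast
    ring

end CommRing

variable {K : Type*} [Field K]

/-- The `k`-th summand of the terminating series
`₃F₂(1 - 3u, 1 + 3u, -n; 3/2, -1 - 3n; 3/4)`. -/
noncomputable def gosperTerm (u : K) (n k : ℕ) : K :=
  ⦅1 - 3 * u⦆_k * ⦅1 + 3 * u⦆_k * ⦅-(n : K)⦆_k /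
    ((k.factorial : K) * ⦅(3 / 2 : K)⦆_k * ⦅(-1 - 3 * n : K)⦆_k) * (3 / 4) ^ k

theorem gosperTerm_zero_right (u : K) (n : ℕ) : gosperTerm u n 0 = 1 := by
  simp [gosperTerm]

theorem gosperTerm_self_succ (u : K) (n : ℕ) : gosperTerm u n (n + 1) = 0 := by
  simp [gosperTerm, ascPochhammer_eval_neg_coe_nat_of_lt n.lt_succ_self]

/-- The telescoping certificate `G` of Zeilberger's method for `gosperTerm`: the combination of
`gosperTerm u (n + 1)` and `gosperTerm u n` that makes up the recurrence of `sum_gosperTerm_succ`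
equals `G k - G (k + 1)` at the index `k + 1`. -/
noncomputable def gosperCert (u : K) (n k : ℕ) : K :=
  ((k + 1) ^ 2 / 9 - u ^ 2) * gosperTerm u n k

variable [CharZero K]

theorem gosperTerm_succ_right (u : K) (n k : ℕ) :
    gosperTerm u n (k + 1) =
      3 * ((k + 1) ^ 2 - 9 * u ^ 2) * (n - k) / (2 * (k + 1) * (2 * k + 3) * (3 * n + 1 - k)) *
        gosperTerm u n k := by
  have h₁ : (-1 - 3 * n + k : K) = -(3 * n + 1 - k) := by ring
  have h₂ : (3 / 2 + k : K) = (2 * k + 3) / 2 := by ring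
  simp only [gosperTerm, ascPochhammer_succ_eval, Nat.factorial_succ, pow_succ, Nat.cast_mul,
    Nat.cast_succ, h₁, h₂]
  simp only [div_eq_mul_inv, mul_inv, inv_neg, inv_inv]
  ring

theorem ascPochhammer_eval_neg_div_succ_succ {n k : ℕ} (h : k ≤ 3 * n + 1) :
    ⦅-((n + 1 : ℕ) : K)⦆_(k + 1) / ⦅(-1 - 3 * (n + 1 : ℕ) : K)⦆_(k + 1) =
      (3 * n + 3 - k) * (3 * n + 2 - k) / (3 * (3 * n + 2) * (3 * n + 4)) *
        (⦅-(n : K)⦆_k / ⦅(-1 - 3 * n : K)⦆_k) := by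
  have num : ⦅-((n + 1 : ℕ) : K)⦆_(k + 1) = -(n + 1) * ⦅-(n : K)⦆_k := by
    simp [ascPochhammer_eval_succ_left]
  have h₁ : (n + 1 : K) ≠ 0 := by norm_cast
  have h₂ : (3 * n + 3 - k : K) ≠ 0 := by rw [sub_ne_zero]; norm_cast; lia
  have h₃ : (3 * n + 2 - k : K) ≠ 0 := by rw [sub_ne_zero]; norm_cast; lia
  have den : ⦅(-1 - 3 * (n + 1 : ℕ) : K)⦆_(k + 1) =
      -(3 * (n + 1) * (3 * n + 2) * (3 * n + 4)) * ⦅(-1 - 3 * n : K)⦆_k /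
        ((3 * n + 3 - k) * (3 * n + 2 - k)) := by
    rw [eq_div_iff (mul_ne_zero h₂ h₃),
      show (-1 - 3 * (n + 1 : ℕ) : K) = -1 - 3 * n - 3 by push_cast; ring]
    linear_combination ascPochhammer_eval_sub_three (-1 - 3 * n : K) k
  rw [num, den]
  field_simp

theorem gosperTerm_succ_succ (u : K) {n k : ℕ} (h : k ≤ 3 * n + 1) :
    gosperTerm u (n + 1) (k + 1) =
      ((k + 1) ^ 2 - 9 * u ^ 2) * (3 * n + 3 - k) * (3 * n + 2 - k) /
        (2 * (k + 1) * (2 * k + 3) * (3 * n + 2) * (3 * n + 4)) * gosperTerm u n k := by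
  have h₁ : (3 / 2 + k : K) = (2 * k + 3) / 2 := by ring
  rw [gosperTerm, mul_div_mul_comm, ascPochhammer_eval_neg_div_succ_succ h]
  simp only [gosperTerm, ascPochhammer_succ_eval, Nat.factorial_succ, pow_succ, Nat.cast_mul,
    Nat.cast_succ, h₁]
  simp only [div_eq_mul_inv, mul_inv, inv_inv]
  ring

theorem gosperTerm_sub_gosperTerm_eq_gosperCert_sub (u : K) {n k : ℕ} (h : k ≤ 3 * n) :
    (2 / 3 + n) * (4 / 3 + n) * gosperTerm u (n + 1) (k + 1) -
        ((n + 1) ^ 2 - u ^ 2) * gosperTerm u n (k + 1) =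
      gosperCert u n k - gosperCert u n (k + 1) := by
  have h₁ : (k + 1 : K) ≠ 0 := by norm_cast
  have h₂ : (2 * k + 3 : K) ≠ 0 := by norm_cast
  have h₃ : (3 * n + 1 - k : K) ≠ 0 := by rw [sub_ne_zero]; norm_cast; lia
  have h₂ : (3 * n + 2 : K) ≠ 0 := by norm_cast
  have h₅ : (3 * n + 4 : K) ≠ 0 := by norm_cast
  rw [gosperCert, gosperCert, gosperTerm_succ_succ u (by lia), gosperTerm_succ_right]
  push_cast
  field_simp
  ring

theorem sum_gosperTerm_succ (u : K) (n : ℕ) :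
    (2 / 3 + n) * (4 / 3 + n) * ∑ k ∈ range (n + 2), gosperTerm u (n + 1) k =
      ((n + 1) ^ 2 - u ^ 2) * ∑ k ∈ range (n + 1), gosperTerm u n k := by
  have telescope :
      ∑ k ∈ range (n + 1), ((2 / 3 + n) * (4 / 3 + n) * gosperTerm u (n + 1) (k + 1) -
        ((n + 1) ^ 2 - u ^ 2) * gosperTerm u n (k + 1)) = 1 / 9 - u ^ 2 :=
    calc
      _ = ∑ k ∈ range (n + 1), (gosperCert u n k - gosperCert u n (k + 1)) :=
        sum_congr rfl fun k hk ↦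
          gosperTerm_sub_gosperTerm_eq_gosperCert_sub u (by have := mem_range.mp hk; lia)
      _ = gosperCert u n 0 - gosperCert u n (n + 1) := sum_range_sub' _ _
      _ = 1 / 9 - u ^ 2 := by
        simp only [gosperCert, gosperTerm_zero_right, gosperTerm_self_succ]
        push_cast
        ring
  have extend : ∑ k ∈ range (n + 1), gosperTerm u n k = ∑ k ∈ range (n + 2), gosperTerm u n k := by
    rw [sum_range_succ _ (n + 1), gosperTerm_self_succ, add_zero]
  rw [sum_sub_distrib, ← mul_sum, ← mul_sum] at telescope
  rw [extend, sum_range_succ' _ (n + 1), sum_range_succ' _ (n + 1),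
    gosperTerm_zero_right, gosperTerm_zero_right]
  linear_combination telescope

theorem sum_gosperTerm (u : K) (n : ℕ) :
    ∑ k ∈ range (n + 1), gosperTerm u n k =
      ⦅1 + u⦆_n * ⦅1 - u⦆_n / (⦅(2 / 3 : K)⦆_n * ⦅(4 / 3 : K)⦆_n) := by
  induction n with
  | zero => simp [gosperTerm]
  | succ n ih =>
    have h : (2 / 3 + n) * (4 / 3 + n) ≠ (0 : K) := by
      have h₁ : (3 * n + 2 : K) ≠ 0 := by norm_cast
      have h₂ : (3 * n + 4 : K) ≠ 0 := by norm_cast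
      rw [show (2 / 3 + n) * (4 / 3 + n) = ((3 * n + 2) * (3 * n + 4) / 9 : K) by ring]
      exact div_ne_zero (mul_ne_zero h₁ h₂) (by norm_num)
    simp only [ascPochhammer_succ_eval]
    rw [mul_mul_mul_comm, mul_mul_mul_comm ⦅2 / 3⦆_n, mul_div_mul_comm, ← ih, mul_div_assoc',
      eq_div_iff h]
    linear_combination sum_gosperTerm_succ u n

theorem ascPochhammer_eval_three_halves (k : ℕ) :
    ⦅(3 / 2 : K)⦆_k = (2 * k + 1) * ⦅(1 / 2 : K)⦆_k := by
  have shift := ascPochhammer_eval_succ_left (1 / 2 : K) k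
  rw [ascPochhammer_succ_eval, show (1 / 2 + 1 : K) = 3 / 2 by norm_num] at shift
  linear_combination -2 * shift

theorem summand_eq_gosperTerm_add_gosperTerm (x : K) (n k : ℕ) :
    ⦅3 * x⦆_k * ⦅-(3 * x)⦆_k * ⦅-(n : K)⦆_k /
        ((k.factorial : K) * ⦅(1 / 2 : K)⦆_k * ⦅(-1 - 3 * n : K)⦆_k) * (3 / 4) ^ k =
      (1 + 3 * x) / 2 * gosperTerm (1 / 3 + x) n k +
        (1 - 3 * x) / 2 * gosperTerm (1 / 3 - x) n k := by
  have h : (2 * k + 1 : K) ≠ 0 := by norm_cast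
  have contiguous := ascPochhammer_eval_mul_eval_neg (3 * x) k
  rw [gosperTerm, gosperTerm, ascPochhammer_eval_three_halves,
    show 1 - 3 * (1 / 3 + x) = -(3 * x) by ring, show 1 + 3 * (1 / 3 + x) = 2 + 3 * x by ring,
    show 1 - 3 * (1 / 3 - x) = 3 * x by ring, show 1 + 3 * (1 / 3 - x) = 2 - 3 * x by ring]
  field_simp
  linear_combination
    ⦅-(n : K)⦆_k / (k.factorial * ⦅(1 / 2 : K)⦆_k * ⦅(-1 - 3 * n : K)⦆_k) * contiguous

theorem gosper_related_second_ell_one_general (n : ℕ) (x : K) :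
    ∑ k ∈ range (n + 1),
      (⦅3 * x⦆_k * ⦅-(3 * x)⦆_k * ⦅-(n : K)⦆_k) /
        ((k.factorial : K) * ⦅(1 / 2 : K)⦆_k * ⦅(-1 - 3 * n : K)⦆_k) * (3 / 4) ^ k =
      (1 + 3 * x) / 2 * ((⦅4 / 3 + x⦆_n * ⦅2 / 3 - x⦆_n) / (⦅(2 / 3 : K)⦆_n * ⦅(4 / 3 : K)⦆_n)) +
        (1 - 3 * x) / 2 *
          ((⦅2 / 3 + x⦆_n * ⦅4 / 3 - x⦆_n) / (⦅(2 / 3 : K)⦆_n * ⦅(4 / 3 : K)⦆_n)) := by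
  simp only [summand_eq_gosperTerm_add_gosperTerm, sum_add_distrib, ← mul_sum, sum_gosperTerm]
  ring_nf

theorem poch_eq_ascPochhammer_eval (a : ℂ) (k : ℕ) : poch a k = ⦅a⦆_k := by
  induction k with
  | zero => simp [poch]
  | succ k ih => rw [ascPochhammer_succ_eval, ← ih, poch, prod_range_succ, poch]

theorem gosper_related_second_ell_one (n : ℕ) (x : ℂ) (h1 : 1 + 6*x ≠ 0) :
    ∑ k ∈ Finset.range (n+1),
      (poch (3*x) k * poch (-(3*x)) k * poch (-(n : ℂ)) k) /
        ((Nat.factorial k : ℂ) * poch (1/2) k * poch (-1 - 3*n : ℂ) k) * (3/4 : ℂ)^k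
      = (1 + 3*x)/2 * ((poch (4/3 + x) n * poch (2/3 - x) n) / (poch (2/3) n * poch (4/3) n))
        + (1 - 3*x)/2 * ((poch (2/3 + x) n * poch (4/3 - x) n) / (poch (2/3) n * poch (4/3) n)) := by
  simpa only [poch_eq_ascPochhammer_eval] using gosper_related_second_ell_one_general n x
end
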